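/- Let p be a prime and let r ∈ ℚ_p be algebraic over ℚ. Then there exists a finite adequate set for r in ℚ_p; that is, r ∈ ℚ_p̃. -/

import Mathlib

/-!
The singleton `{r}` is cut out in `ℚ_p` by a system of polynomial equations over `ℚ` with
auxiliary unknowns, and a finite set `A` recording all intermediate values in the evaluation of
these equations forces `f r` to solve the same system.

To avoid choosing `A` by hand, the partial homomorphisms on finite sets `A` generate a filter on
`K → K` as `A` grows. For this filter, every `f` is eventually compatible with any given sum or
product, so `a ↦ (f ↦ f a)` is a ring homomorphism from `K` to the ring of germs
(`partialHomGerm`). A number `r` lies in `K̃` exactly when `f r = r` eventually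
(`mem_KTilde_of_eventually`), and in characteristic zero eventually `f q = q` for each rational
`q`; hence polynomial relations over `ℚ` are eventually preserved.

The system is the following. Let `P(r) = 0` with `P ≠ 0` over `ℚ`, and take `n` so large that `r`
is the only root of `P` at distance at most `p * p⁻ⁿ` from `r`. Choose `q ∈ ℚ` within `p⁻ⁿ` of
`r`, and write `r = pⁿ x + q` with `‖x‖ ≤ 1`. By Hensel's lemma `1 + p³ x²` is a square `y²`
(`exists_sq_eq_of_norm_le_one`). Conversely, `y² = 1 + p³ x²` forces `‖x‖ ≤ p`, by parity of
valuations (`norm_le_of_sq_eq`). So any solution of `P(s) = 0`, `s = pⁿ x' + q`,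
`y'² = 1 + p³ x'²` has `‖s - r‖ ≤ p * p⁻ⁿ`, whence `s = r`.
-/

/-- A finite set `A ⊆ K` with `r ∈ A` is *adequate* for `r` if every map `f : A → K`
(here represented by its values, as a map `f : K → K` restricted in the hypotheses to `A`)
satisfying (1) `f 1 = 1` whenever `1 ∈ A`, (2) `f (a+b) = f a + f b` whenever `a, b, a+b ∈ A`,
(3) `f (a*b) = f a * f b` whenever `a, b, a*b ∈ A`, also satisfies `f r = r`. -/
def IsAdequate {K : Type*} [Field K] (r : K) (A : Finset K) : Prop :=
  r ∈ A ∧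
  ∀ f : K → K,
    ((1 : K) ∈ A → f 1 = 1) →
    (∀ a ∈ A, ∀ b ∈ A, a + b ∈ A → f (a + b) = f a + f b) →
    (∀ a ∈ A, ∀ b ∈ A, a * b ∈ A → f (a * b) = f a * f b) →
    f r = r

/-- `K̃` is the set of `r ∈ K` admitting a finite adequate set. -/
def KTilde (K : Type*) [Field K] : Set K :=
  {r : K | ∃ A : Finset K, IsAdequate r A}

open Filter Polynomial

/-- `f` is a homomorphism as far as can be seen on `A`: conditions (1)–(3) in the definition of an
adequate set. -/
def IsPartialHom {K : Type*} [Field K] (A : Finset K) (f : K → K) : Prop :=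
  ((1 : K) ∈ A → f 1 = 1) ∧
  (∀ a ∈ A, ∀ b ∈ A, a + b ∈ A → f (a + b) = f a + f b) ∧
  (∀ a ∈ A, ∀ b ∈ A, a * b ∈ A → f (a * b) = f a * f b)

/-- The filter on `K → K` generated by the sets of partial homomorphisms on `A`, for finite
`A ⊆ K`. -/
def partialHomFilter (K : Type*) [Field K] : Filter (K → K) :=
  ⨅ A : Finset K, 𝓟 {f | IsPartialHom A f}

section General

variable {K : Type*} [Field K]

lemma eventually_isPartialHom (A : Finset K) :
    ∀ᶠ f in partialHomFilter K, IsPartialHom A f :=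
  mem_iInf_of_mem A (mem_principal_self _)

lemma IsPartialHom.mono {A B : Finset K} (h : A ⊆ B) {f : K → K} (hf : IsPartialHom B f) :
    IsPartialHom A f :=
  ⟨fun h1 => hf.1 (h h1), fun a ha b hb hab => hf.2.1 a (h ha) b (h hb) (h hab),
    fun a ha b hb hab => hf.2.2 a (h ha) b (h hb) (h hab)⟩

lemma mem_KTilde_of_eventually {r : K} (h : ∀ᶠ f in partialHomFilter K, f r = r) :
    r ∈ KTilde K := by
  classical
  have hb : (partialHomFilter K).HasBasis (fun _ : Finset K => True)
      (fun A => {f | IsPartialHom A f}) := by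
    refine hasBasis_iInf_principal fun A B => ⟨A ∪ B, ?_, ?_⟩
    · exact fun f hf => IsPartialHom.mono Finset.subset_union_left hf
    · exact fun f hf => IsPartialHom.mono Finset.subset_union_right hf
  obtain ⟨A, -, hA⟩ := hb.eventually_iff.1 h
  refine ⟨insert r A, Finset.mem_insert_self _ _, fun f h1 h2 h3 => hA ?_⟩
  exact IsPartialHom.mono (Finset.subset_insert r A) ⟨h1, h2, h3⟩

lemma eventually_map_one : ∀ᶠ f in partialHomFilter K, f 1 = 1 :=
  (eventually_isPartialHom {1}).mono fun _ hf => hf.1 (by simp)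

lemma eventually_map_add (a b : K) : ∀ᶠ f in partialHomFilter K, f (a + b) = f a + f b := by
  classical
  exact (eventually_isPartialHom {a, b, a + b}).mono fun _ hf =>
    hf.2.1 a (by simp) b (by simp) (by simp)

lemma eventually_map_mul (a b : K) : ∀ᶠ f in partialHomFilter K, f (a * b) = f a * f b := by
  classical
  exact (eventually_isPartialHom {a, b, a * b}).mono fun _ hf =>
    hf.2.2 a (by simp) b (by simp) (by simp)

lemma eventually_map_zero : ∀ᶠ f in partialHomFilter K, f 0 = 0 := by
  filter_upwards [eventually_map_add (0 : K) 0] with f hf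
  simpa using hf

/-- Evaluation at a point, as a ring homomorphism from `K` to the ring of germs of functions of a
partial homomorphism `f`: it sends `a` to the germ of `f ↦ f a`. -/
def partialHomGerm (K : Type*) [Field K] : K →+* (partialHomFilter K).Germ K where
  toFun a := ((fun f : K → K => f a : (K → K) → K) : (partialHomFilter K).Germ K)
  map_one' := Germ.coe_eq.2 eventually_map_one
  map_mul' a b := Germ.coe_eq.2 (eventually_map_mul a b)
  map_zero' := Germ.coe_eq.2 eventually_map_zero
  map_add' a b := Germ.coe_eq.2 (eventually_map_add a b)

variable [CharZero K]

lemma eventually_map_rat (q : ℚ) : ∀ᶠ f in partialHomFilter K, f (q : K) = (q : K) := by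
  -- Both sides give ring homomorphisms from `ℚ` to germs, and there is at most one of these.
  have h : (partialHomGerm K).comp (Rat.castHom K) =
      (Germ.coeRingHom (partialHomFilter K)).comp
        ((Pi.constRingHom (K → K) K).comp (Rat.castHom K)) :=
    RingHom.ext_rat _ _
  exact Germ.coe_eq.1 (DFunLike.congr_fun h q)

lemma eventually_map_aeval (P : ℚ[X]) (a : K) :
    ∀ᶠ f in partialHomFilter K, f (aeval a P) = aeval (f a) P := by
  induction P using Polynomial.induction_on with
  | C q => simpa using eventually_map_rat q
  | add P Q hP hQ =>
    filter_upwards [hP, hQ, eventually_map_add (aeval a P) (aeval a Q)] with f h1 h2 h3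
    rw [map_add, h3, h1, h2, map_add]
  | monomial n q h =>
    filter_upwards [h, eventually_map_mul (aeval a (C q * X ^ n)) a] with f h1 h2
    rw [pow_succ, ← mul_assoc, map_mul (aeval a), aeval_X, h2, h1, map_mul (aeval (f a)) _ X, aeval_X]

end General

section Padic

variable {p : ℕ} [Fact p.Prime]

lemma exists_sq_eq_of_norm_le_one (x : ℚ_[p]) (hx : ‖x‖ ≤ 1) :
    ∃ y : ℚ_[p], y * y = 1 + (p : ℚ_[p]) ^ 3 * (x * x) := by
  have hp1 : (1 : ℝ) < p := by exact_mod_cast (Fact.out : p.Prime).one_lt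
  have hp0 : (0 : ℝ) < p := by linarith
  let x' : ℤ_[p] := ⟨x, hx⟩
  let F : ℤ_[p][X] := X ^ 2 - C (1 + (p : ℤ_[p]) ^ 3 * (x' * x'))
  have hF : aeval (1 : ℤ_[p]) F = -((p : ℤ_[p]) ^ 3 * (x' * x')) := by
    simp [F]
  have hF' : aeval (1 : ℤ_[p]) (derivative F) = 2 := by
    simp only [F, derivative_sub, derivative_C, sub_zero, derivative_X_pow]
    simp
  have h2 : (p : ℝ)⁻¹ ≤ ‖(2 : ℤ_[p])‖ := by
    -- For `p` odd, `2` is a unit; for `p = 2` equality holds.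
    by_cases h : ‖(2 : ℤ_[p])‖ < 1
    · have h2p : p ∣ 2 := by
        have := (PadicInt.norm_int_lt_one_iff_dvd (p := p) 2).1 (by exact_mod_cast h)
        exact_mod_cast this
      have hp2 : p = 2 := (Nat.prime_dvd_prime_iff_eq Fact.out Nat.prime_two).1 h2p
      have : ((2 : ℤ_[p])) = (p : ℤ_[p]) := by
        exact_mod_cast congrArg (Nat.cast : ℕ → ℤ_[p]) hp2.symm
      rw [this, PadicInt.norm_p]
    · exact (inv_le_one_of_one_le₀ hp1.le).trans (not_lt.1 h)
  have hlt : ‖aeval (1 : ℤ_[p]) F‖ < ‖aeval (1 : ℤ_[p]) (derivative F)‖ ^ 2 := by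
    rw [hF, hF', norm_neg, norm_mul, norm_pow, PadicInt.norm_p]
    have hx1 : ‖x' * x'‖ ≤ 1 := PadicInt.norm_le_one _
    have hi0 : 0 < (p : ℝ)⁻¹ := inv_pos.2 hp0
    have hi1 : (p : ℝ)⁻¹ < 1 := inv_lt_one_of_one_lt₀ hp1
    calc (p : ℝ)⁻¹ ^ 3 * ‖x' * x'‖ ≤ (p : ℝ)⁻¹ ^ 3 :=
          mul_le_of_le_one_right (by positivity) hx1
      _ < (p : ℝ)⁻¹ ^ 2 := pow_lt_pow_right_of_lt_one₀ hi0 hi1 (by norm_num)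
      _ ≤ ‖(2 : ℤ_[p])‖ ^ 2 := by gcongr
  obtain ⟨z, hz, -⟩ := hensels_lemma hlt
  refine ⟨z, ?_⟩
  have hz' : z * z = 1 + (p : ℤ_[p]) ^ 3 * (x' * x') := by
    have : z ^ 2 - (1 + (p : ℤ_[p]) ^ 3 * (x' * x')) = 0 := by simpa [F] using hz
    linear_combination this
  have := congrArg (fun t : ℤ_[p] => (t : ℚ_[p])) hz'
  push_cast at this
  exact this

lemma norm_le_of_sq_eq {x y : ℚ_[p]} (h : y * y = 1 + (p : ℚ_[p]) ^ 3 * (x * x)) :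
    ‖x‖ ≤ p := by
  have hp1 : (1 : ℝ) < p := by exact_mod_cast (Fact.out : p.Prime).one_lt
  have hp0 : (0 : ℝ) < p := by linarith
  by_contra! hx
  have hx0 : x ≠ 0 := by
    rintro rfl
    rw [norm_zero] at hx
    linarith
  have hxm := Padic.norm_eq_zpow_neg_valuation hx0
  set m : ℤ := -x.valuation
  have hm : 1 < m := by
    rw [hxm] at hx
    exact (zpow_lt_zpow_iff_right₀ hp1).1 (by simpa using hx)
  have hn : ‖(p : ℚ_[p]) ^ 3 * (x * x)‖ = (p : ℝ) ^ (2 * m - 3) := by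
    rw [norm_mul, norm_mul, norm_pow, Padic.norm_p, hxm, ← zpow_neg_one, ← zpow_natCast,
      ← zpow_mul, ← zpow_add₀ hp0.ne', ← zpow_add₀ hp0.ne']
    congr 1
    push_cast
    ring
  have hgt : 1 < ‖(p : ℚ_[p]) ^ 3 * (x * x)‖ := by
    rw [hn]
    exact one_lt_zpow₀ hp1 (by omega)
  have hy : ‖y‖ * ‖y‖ = (p : ℝ) ^ (2 * m - 3) := by
    rw [← norm_mul, h, Padic.add_eq_max_of_ne (by rw [norm_one]; exact hgt.ne), norm_one,
      max_eq_right hgt.le, hn]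
  have hy0 : y ≠ 0 := by
    rintro rfl
    rw [norm_zero, zero_mul] at hy
    exact (zpow_pos hp0 _).ne hy
  rw [Padic.norm_eq_zpow_neg_valuation hy0, ← zpow_add₀ hp0.ne'] at hy
  have := zpow_right_injective₀ hp0 hp1.ne' hy
  omega

end Padic

/-- Every `p`-adic number algebraic over `ℚ` admits a finite adequate set, i.e. lies in `ℚ_p̃`. -/
theorem stmt_18 (p : ℕ) [Fact p.Prime] (r : ℚ_[p]) (hr : IsAlgebraic ℚ r) :
    r ∈ KTilde ℚ_[p] := by
  have hp1 : (1 : ℝ) < p := by exact_mod_cast (Fact.out : p.Prime).one_lt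
  have hp0 : (0 : ℝ) < p := by linarith
  have hpK : (p : ℚ_[p]) ≠ 0 := by exact_mod_cast (Fact.out : p.Prime).ne_zero
  obtain ⟨P, hP, hPr⟩ := hr
  obtain ⟨ε, hε, hiso⟩ : ∃ ε > 0, ∀ s : ℚ_[p], ‖s - r‖ < ε → aeval s P = 0 → s = r := by
    have hfin : (P.rootSet ℚ_[p] \ {r}).Finite := (P.rootSet_finite ℚ_[p]).subset Set.sdiff_subset
    obtain ⟨ε, hε, h⟩ := Metric.isOpen_iff.1 hfin.isClosed.isOpen_compl r (by simp)
    refine ⟨ε, hε, fun s hs hPs => ?_⟩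
    by_contra hne
    exact h (mem_ball_iff_norm.2 hs) ⟨(mem_rootSet.2 ⟨hP, hPs⟩), hne⟩
  obtain ⟨n, hn⟩ : ∃ n : ℕ, (p : ℝ)⁻¹ ^ n * p < ε := by
    obtain ⟨n, hn⟩ := exists_pow_lt_of_lt_one (div_pos hε hp0) (inv_lt_one_of_one_lt₀ hp1)
    exact ⟨n, (lt_div_iff₀ hp0).1 hn⟩
  have hpn : 0 < (p : ℝ)⁻¹ ^ n := by positivity
  obtain ⟨q, hq⟩ := Padic.rat_dense p r hpn
  obtain ⟨x, hx⟩ : ∃ x : ℚ_[p], (p : ℚ_[p]) ^ n * x + q = r :=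
    ⟨(r - q) / (p : ℚ_[p]) ^ n, by field_simp; ring⟩
  have hx1 : ‖x‖ ≤ 1 := by
    rw [← hx, add_sub_cancel_right, norm_mul, norm_pow, Padic.norm_p] at hq
    exact ((mul_lt_iff_lt_one_right hpn).1 hq).le
  obtain ⟨y, hy⟩ := exists_sq_eq_of_norm_le_one x hx1
  apply mem_KTilde_of_eventually
  -- The two polynomials in `x` evaluate to `r` and to `y * y`.
  filter_upwards [eventually_map_aeval P r, eventually_map_zero,
    eventually_map_aeval (C ((p : ℚ) ^ n) * X + C q) x,
    eventually_map_aeval (1 + C ((p : ℚ) ^ 3) * (X * X)) x,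
    eventually_map_mul y y] with f hfP hf0 hfx hfy hfyy
  have hx' : f r = (p : ℚ_[p]) ^ n * f x + q := by simpa [hx] using hfx
  have hy' : f y * f y = 1 + (p : ℚ_[p]) ^ 3 * (f x * f x) := by
    rw [← hfyy, hy]
    simpa using hfy
  have hfx1 := norm_le_of_sq_eq hy'
  refine hiso _ (lt_of_le_of_lt ?_ hn) (by rw [← hfP, hPr, hf0])
  have hsub : f r - r = (p : ℚ_[p]) ^ n * (f x - x) := by
    rw [hx']
    linear_combination hx
  rw [hsub, norm_mul, norm_pow, Padic.norm_p]
  gcongr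
  rw [sub_eq_add_neg]
  refine (Padic.nonarchimedean _ _).trans (max_le hfx1 ?_)
  rw [norm_neg]
  exact hx1.trans hp1.le
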